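/- Let $p$ be a prime and $F$ a field of characteristic $p$. In the cyclic algebra $A = [\alpha, \beta)_{p,F}$ generated by $x, y$ with $x^p - x = \alpha$, $y^p = \beta$, $yxy^{-1} = x + 1$, for each $j \in \{1, \dots, p-1\}$, every element $v \in F(x) y^j$ satisfies $v^p \in F$. -/

import Mathlib

open Polynomial in
theorem aux_comm {F A : Type*} [Field F] [Ring A] [Algebra F A] (x y : A)
    (h : y * x = (x + 1) * y) (n : ℕ) (f : F[X]) :
    y ^ n * aeval x f = aeval x (f.comp (X + C (n : F))) * y ^ n := by
  have h1 : ∀ n : ℕ, y ^ n * x = (x + n) * y ^ n := by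
    intro n
    induction n with
    | zero => simp
    | succ k ih =>
      rw [pow_succ, mul_assoc, h, ← mul_assoc, mul_add, ih]
      rw [mul_one, show (x + ((k + 1 : ℕ) : A)) = (x + k) + 1 by push_cast; abel]
      rw [← mul_assoc, add_mul (x + (k : A)) 1, one_mul]
  have h2 : ∀ i : ℕ, y ^ n * x ^ i = (x + n) ^ i * y ^ n := by
    intro i
    induction i with
    | zero => simp
    | succ k ih => rw [pow_succ, ← mul_assoc, ih, mul_assoc, h1, ← mul_assoc, ← pow_succ]
  have h3 : aeval x (X + C (n : F)) = x + n := by simp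
  rw [aeval_comp, h3]
  induction f using Polynomial.induction_on' with
  | add p q hp hq => simp only [map_add, mul_add, add_mul, hp, hq]
  | monomial i a =>
    rw [aeval_monomial, aeval_monomial, ← mul_assoc, ← Algebra.commutes a (y ^ n), mul_assoc, h2,
      mul_assoc]

open Polynomial in
theorem aux_pow {F A : Type*} [Field F] [Ring A] [Algebra F A] (x y : A)
    (h : y * x = (x + 1) * y) (j : ℕ) (f : F[X]) (n : ℕ) :
    (aeval x f * y ^ j) ^ n =
      aeval x (∏ k ∈ Finset.range n, f.comp (X + C ((j * k : ℕ) : F))) * y ^ (j * n) := by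
  induction n with
  | zero => simp
  | succ k ih =>
    rw [pow_succ, ih, Finset.prod_range_succ, map_mul, mul_assoc, ← mul_assoc (y ^ (j * k)),
      aux_comm x y h, mul_assoc, ← pow_add, ← mul_assoc, Nat.mul_succ]

open Polynomial in
theorem aux_inv {F A : Type*} [Field F] [Ring A] [Algebra F A] (p : ℕ) [Fact p.Prime] [CharP F p]
    (α : F) (x : A) (hx : x ^ p - x = algebraMap F A α) (j : ℕ) (hj : (j : F) ≠ 0) (g : F[X])
    (hg : g.comp (X + C (j : F)) = g) : aeval x g ∈ (algebraMap F A).range := by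
  classical
  have hp : p.Prime := Fact.out
  set m : F[X] := X ^ p - (X + C α) with hm
  have hdeg : (X + C α : F[X]).degree < (p : ℕ) := by
    rw [degree_X_add_C]; exact_mod_cast hp.one_lt
  have hmon : m.Monic := monic_X_pow_sub (by simpa using hdeg)
  have hmdeg : m.degree = p := by
    rw [hm, degree_sub_eq_left_of_degree_lt (by simpa using hdeg), degree_X_pow]
  have hxm : aeval x m = 0 := by
    simp [hm, ← hx]
  have hjp : (j : F) ^ p = j := by
    exact map_natCast (frobenius F p) j
  have hmc : m.comp (X + C (j : F)) = m := by
    have : (X + C (j : F)) ^ p = X ^ p + C (j : F) := by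
      rw [add_pow_char, ← C_pow, hjp]
    rw [hm, sub_comp, pow_comp, X_comp, add_comp, X_comp, C_comp, this]
    ring
  set r := g %ₘ m with hr
  have hrdeg : r.degree < p := by rw [← hmdeg]; exact degree_modByMonic_lt _ hmon
  have hrc : r.comp (X + C (j : F)) = r := by
    have e := modByMonic_add_div g m
    have e2 := congrArg (fun q => q.comp (X + C (j : F))) e
    simp only [add_comp, mul_comp, hmc, hg] at e2
    refine ((div_modByMonic_unique _ _ hmon ⟨e2, ?_⟩).2).symm
    rw [hmdeg]
    refine lt_of_le_of_lt ?_ hrdeg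
    by_cases h0 : g %ₘ m = 0
    · simp [hr, h0]
    · rw [hr, degree_eq_natDegree h0]
      refine degree_le_natDegree.trans ?_
      rw [natDegree_comp, natDegree_X_add_C, mul_one]
  have hval : ∀ k : ℕ, r.eval ((k : F) * j) = r.eval 0 := by
    intro k
    induction k with
    | zero => simp
    | succ k ih =>
      rw [← ih]
      conv_rhs => rw [← hrc]
      rw [eval_comp]
      congr 1
      simp; ring
  have hconst : r = C (r.eval 0) := by
    rw [← sub_eq_zero]
    refine eq_zero_of_degree_lt_of_eval_finset_eq_zero
      ((Finset.range p).image fun k : ℕ => (k : F) * j) ?_ ?_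
    · rw [Finset.card_image_of_injOn, Finset.card_range]
      · refine lt_of_le_of_lt (degree_sub_le _ _) (max_lt hrdeg ?_)
        exact lt_of_le_of_lt degree_C_le (by exact_mod_cast hp.pos)
      · intro a ha b hb hab
        simp only [Finset.coe_range, Set.mem_Iio] at ha hb
        exact CharP.natCast_injOn_Iio F p ha hb (mul_right_cancel₀ hj hab)
    · intro z hz
      obtain ⟨k, -, rfl⟩ := Finset.mem_image.1 hz
      simp [hval k]
  refine ⟨r.eval 0, ?_⟩
  rw [← modByMonic_add_div g m, map_add, map_mul, hxm, zero_mul, add_zero, ← hr]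
  conv_rhs => rw [hconst]
  simp


/-- Let `p` be a prime and `F` a field of characteristic `p`. In the cyclic algebra
`A = [α, β)_{p,F}` generated by `x, y` with `x^p - x = α`, `y^p = β`, `y x y⁻¹ = x + 1`
(`β ≠ 0`, so `y` is a unit, and the relation reads `y * x = (x + 1) * y`), for every
`j ∈ {1, …, p-1}`, every element `v ∈ F(x)·yʲ` satisfies `v^p ∈ F`. -/
theorem pow_p_mem_base_of_mem_Fx_yj (p : ℕ) (hp : p.Prime) (F : Type*) [Field F]
    [CharP F p] (α β : F) (hβ : β ≠ 0) (A : Type*) [Ring A] [Algebra F A]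
    (hdim : Module.finrank F A = p ^ 2) (x y : A)
    (hx : x ^ p - x = algebraMap F A α) (hy : y ^ p = algebraMap F A β)
    (hu : IsUnit y) (hcomm : y * x = (x + 1) * y) :
    ∀ j : ℕ, 1 ≤ j → j ≤ p - 1 → ∀ c : Fin p → F,
      ((∑ i : Fin p, algebraMap F A (c i) * x ^ (i : ℕ)) * y ^ j) ^ p ∈
        (algebraMap F A).range := by

  intro j hj1 hj2 c
  classical
  haveI : Fact p.Prime := ⟨hp⟩
  have hj : (j : F) ≠ 0 := by
    rw [Ne, CharP.cast_eq_zero_iff F p]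
    intro hd
    have := Nat.le_of_dvd (by omega) hd
    have := hp.pos
    omega
  have hf : (∑ i : Fin p, algebraMap F A (c i) * x ^ (i : ℕ)) =
      Polynomial.aeval x (∑ i : Fin p, Polynomial.C (c i) * Polynomial.X ^ (i : ℕ)) := by
    simp
  rw [hf, aux_pow x y hcomm]
  refine Subring.mul_mem _ ?_ ?_
  · refine aux_inv p α x hx j hj _ ?_
    generalize (∑ i : Fin p, Polynomial.C (c i) * Polynomial.X ^ (i : ℕ)) = f
    rw [Polynomial.prod_comp]
    have key : ∀ k : ℕ, (f.comp (Polynomial.X + Polynomial.C ((j * k : ℕ) : F))).comp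
        (Polynomial.X + Polynomial.C (j : F)) =
        f.comp (Polynomial.X + Polynomial.C ((j * (k + 1) : ℕ) : F)) := by
      intro k
      rw [Polynomial.comp_assoc]
      congr 1
      simp
      ring
    simp only [key]
    obtain ⟨q, rfl⟩ : ∃ q, p = q + 1 := ⟨p - 1, by have := hp.pos; omega⟩
    rw [Finset.prod_range_succ, Finset.prod_range_succ']
    congr 3
    rw [Nat.cast_mul, CharP.cast_eq_zero F (q + 1)]
    simp
  · rw [mul_comm, pow_mul, hy]
    exact ⟨β ^ j, map_pow _ _ _⟩
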